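/- arXiv:2212.12566 — 3 statements merged into one kernel-verified Lean document; each statement's English description precedes it below -/
import Mathlib

section
/- (Maximality of the Daniell extension.) Let (L, I) be an integral system on a set X. Then (L¹, I¹) is again an integral system on X, and its upper and lower integrals coincide with those of (L, I): for every function f : X → [−∞,∞], the upper integral of f computed from (L¹, I¹) equals the upper integral of f computed from (L, I), and likewise for lower integrals. Consequently, a function f : X → ℝ is I¹-integrable if and only if it is I-integrable, with the same integral; that is, the Daniell extension of (L¹, I¹) is (L¹, I¹) itself. -/
open Filter Topology

/-- An integral system on a set `X`: a linear lattice `L` of real-valued functions on `X`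
(a vector subspace of `ℝ^X` closed under pointwise max and min) together with a
preintegral `I` on it (a positive linear functional that is continuous in the sense that
`I fₙ → 0` whenever `fₙ ∈ L` are nonnegative and decrease pointwise to `0`). -/
structure IntegralSystem (X : Type*) where
  L : Set (X → ℝ)
  I : (X → ℝ) → ℝ
  zero_mem : (0 : X → ℝ) ∈ L
  add_mem : ∀ ⦃f g : X → ℝ⦄, f ∈ L → g ∈ L → f + g ∈ L
  smul_mem : ∀ (c : ℝ) ⦃f : X → ℝ⦄, f ∈ L → c • f ∈ L
  sup_mem : ∀ ⦃f g : X → ℝ⦄, f ∈ L → g ∈ L → f ⊔ g ∈ L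
  inf_mem : ∀ ⦃f g : X → ℝ⦄, f ∈ L → g ∈ L → f ⊓ g ∈ L
  I_add : ∀ ⦃f g : X → ℝ⦄, f ∈ L → g ∈ L → I (f + g) = I f + I g
  I_smul : ∀ (c : ℝ) ⦃f : X → ℝ⦄, f ∈ L → I (c • f) = c * I f
  I_pos : ∀ ⦃f : X → ℝ⦄, f ∈ L → (∀ x, 0 ≤ f x) → 0 ≤ I f
  I_cont : ∀ f : ℕ → X → ℝ, (∀ n, f n ∈ L) → (∀ n x, 0 ≤ f n x) →
    (∀ n x, f (n + 1) x ≤ f n x) →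
    (∀ x, Tendsto (fun n => f n x) atTop (𝓝 0)) →
    Tendsto (fun n => I (f n)) atTop (𝓝 0)

variable {X : Type*}

/-- `f : X → (−∞,∞]` belongs to `L_↑` iff some sequence in `L` increases pointwise to `f`. -/
def MemLup (S : IntegralSystem X) (f : X → EReal) : Prop :=
  ∃ g : ℕ → X → ℝ, (∀ n, g n ∈ S.L) ∧ (∀ n x, g n x ≤ g (n + 1) x) ∧
    ∀ x, Tendsto (fun n => ((g n x : EReal))) atTop (𝓝 (f x))

/-- For `f ∈ L_↑`, `I_↑ f = lim I (g n)` for any sequence `(g n)` in `L` increasing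
pointwise to `f`; the value does not depend on the chosen sequence, so we may define it as
the supremum of all such limits. -/
noncomputable def Iup (S : IntegralSystem X) (f : X → EReal) : EReal :=
  sSup { c : EReal | ∃ g : ℕ → X → ℝ, (∀ n, g n ∈ S.L) ∧ (∀ n x, g n x ≤ g (n + 1) x) ∧
    (∀ x, Tendsto (fun n => ((g n x : EReal))) atTop (𝓝 (f x))) ∧
    Tendsto (fun n => ((S.I (g n) : EReal))) atTop (𝓝 c) }

/-- `L_↓ = −L_↑`. -/
def MemLdown (S : IntegralSystem X) (f : X → EReal) : Prop :=
  MemLup S (fun x => -(f x))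

/-- `I_↓ f = −I_↑(−f)`. -/
noncomputable def Idown (S : IntegralSystem X) (f : X → EReal) : EReal :=
  -(Iup S (fun x => -(f x)))

/-- The upper integral `Ī f = inf { I_↑ g : g ∈ L_↑, f ≤ g }` (with `inf ∅ = ∞`). -/
noncomputable def upperInt (S : IntegralSystem X) (f : X → EReal) : EReal :=
  sInf (Iup S '' { g | MemLup S g ∧ ∀ x, f x ≤ g x })

/-- The lower integral `I̲ f = sup { I_↓ g : g ∈ L_↓, g ≤ f }` (with `sup ∅ = −∞`). -/
noncomputable def lowerInt (S : IntegralSystem X) (f : X → EReal) : EReal :=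
  sSup (Idown S '' { g | MemLdown S g ∧ ∀ x, g x ≤ f x })

/-- `f : X → ℝ` is `I`-integrable iff its lower and upper integrals coincide and are finite. -/
def Integrable1 (S : IntegralSystem X) (f : X → ℝ) : Prop :=
  ∃ c : ℝ, lowerInt S (fun x => ((f x : EReal))) = (c : EReal) ∧
    upperInt S (fun x => ((f x : EReal))) = (c : EReal)

/-- The Daniell extension `I¹` of `I`: the common value of the lower and upper integrals of
an integrable function. -/
noncomputable def Int1 (S : IntegralSystem X) (f : X → ℝ) : ℝ :=
  (upperInt S (fun x => ((f x : EReal)))).toReal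

/-! The upper integral of `f` is the infimum of `⨆ n, I (g n)` over the increasing sequences `g`
in `L` with `f ≤ ⨆ n, g n`; hence it is subadditive, and countably so on nonnegative functions.
A function is integrable iff `L` approximates it in the seminorm `Ī |·|`, which makes `L¹` a
lattice. For an increasing sequence in `L¹`, write its limit as the first term plus the sum of the
increments: countable subadditivity shows that the upper integral of the limit is at most the limit
of the integrals. This gives both the continuity of `I¹` and the fact that majorants drawn from
`L¹` instead of `L` do not lower the upper integral. -/

theorem iSup_coe_add_iSup_coe_le {ι : Type*} [SemilatticeSup ι] {a b : ι → ℝ}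
    (ha : Monotone a) (hb : Monotone b) :
    (⨆ i, (a i : EReal)) + ⨆ i, (b i : EReal) ≤ ⨆ i, ((a i + b i : ℝ) : EReal) := by
  refine EReal.add_le_of_forall_lt fun s hs t ht => ?_
  obtain ⟨i, hi⟩ := lt_iSup_iff.1 hs
  obtain ⟨j, hj⟩ := lt_iSup_iff.1 ht
  calc s + t ≤ a i + b j := add_le_add hi.le hj.le
    _ ≤ ((a (i ⊔ j) + b (i ⊔ j) : ℝ) : EReal) := by
      exact_mod_cast add_le_add (ha le_sup_left) (hb le_sup_right)
    _ ≤ _ := le_iSup (fun k => ((a k + b k : ℝ) : EReal)) (i ⊔ j)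

theorem tendsto_coe_iSup {ι : Type*} [Preorder ι] {a : ι → ℝ} (ha : Monotone a) :
    Tendsto (fun i => (a i : EReal)) atTop (𝓝 (⨆ i, (a i : EReal))) :=
  tendsto_atTop_iSup fun _ _ h => EReal.coe_le_coe_iff.2 (ha h)

theorem exists_coe_eq_of_forall_pos {a b : EReal} (hab : a ≤ b)
    (h : ∀ ε > 0, ∃ c : ℝ, ((c - ε : ℝ) : EReal) ≤ a ∧ b ≤ ((c + ε : ℝ) : EReal)) :
    ∃ c : ℝ, a = c ∧ b = c := by
  obtain ⟨c, hca, hbc⟩ := h 1 one_pos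
  have ha : a ≠ ⊥ := ((EReal.bot_lt_coe _).trans_le hca).ne'
  have hb : b ≠ ⊤ := (hbc.trans_lt (EReal.coe_lt_top _)).ne
  lift a to ℝ using ⟨(hab.trans_lt hb.lt_top).ne, ha⟩
  lift b to ℝ using ⟨hb, (ha.bot_lt.trans_le hab).ne'⟩
  have hba : b ≤ a := le_of_forall_pos_le_add fun ε hε => by
    obtain ⟨c, hca, hbc⟩ := h (ε / 2) (half_pos hε)
    linarith [EReal.coe_le_coe_iff.1 hca, EReal.coe_le_coe_iff.1 hbc]
  exact ⟨a, rfl, congrArg _ (hba.antisymm (EReal.coe_le_coe_iff.1 hab))⟩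

namespace IntegralSystem

variable {S : IntegralSystem X} {f g : X → ℝ}

theorem neg_mem (hf : f ∈ S.L) : -f ∈ S.L := by
  simpa only [neg_smul, one_smul] using S.smul_mem (-1) hf

theorem I_neg (hf : f ∈ S.L) : S.I (-f) = -S.I f := by
  simpa only [neg_smul, one_smul, neg_mul, one_mul] using S.I_smul (-1) hf

theorem sub_mem (hf : f ∈ S.L) (hg : g ∈ S.L) : f - g ∈ S.L :=
  sub_eq_add_neg f g ▸ S.add_mem hf (neg_mem hg)

theorem I_sub (hf : f ∈ S.L) (hg : g ∈ S.L) : S.I (f - g) = S.I f - S.I g := by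
  rw [sub_eq_add_neg, S.I_add hf (neg_mem hg), I_neg hg, sub_eq_add_neg]

theorem I_zero (S : IntegralSystem X) : S.I 0 = 0 := by
  simpa only [zero_smul, zero_mul] using S.I_smul 0 S.zero_mem

theorem I_mono (hf : f ∈ S.L) (hg : g ∈ S.L) (h : f ≤ g) : S.I f ≤ S.I g :=
  sub_nonneg.1 (I_sub hg hf ▸ S.I_pos (sub_mem hg hf) fun x => sub_nonneg.2 (h x))

theorem sum_mem {ι : Type*} {s : Finset ι} {u : ι → X → ℝ} (hu : ∀ i ∈ s, u i ∈ S.L) :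
    ∑ i ∈ s, u i ∈ S.L :=
  Finset.sum_induction u (· ∈ S.L) (fun _ _ h₁ h₂ => S.add_mem h₁ h₂) S.zero_mem hu

theorem I_sum {ι : Type*} {s : Finset ι} {u : ι → X → ℝ} (hu : ∀ i ∈ s, u i ∈ S.L) :
    S.I (∑ i ∈ s, u i) = ∑ i ∈ s, S.I (u i) := by
  classical
  induction s using Finset.induction_on with
  | empty => simpa only [Finset.sum_empty] using S.I_zero
  | insert i s hi ih =>
    have hs : ∀ j ∈ s, u j ∈ S.L := fun j hj => hu j (Finset.mem_insert_of_mem hj)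
    rw [Finset.sum_insert hi, Finset.sum_insert hi,
      S.I_add (hu i (Finset.mem_insert_self i s)) (sum_mem hs), ih hs]

end IntegralSystem

open IntegralSystem

/-- `g` is an increasing sequence in `L` whose supremum, an element of `L_↑`, is at least `f`:
the data over which the upper integral of `f` is an infimum. -/
structure Majorizes (S : IntegralSystem X) (g : ℕ → X → ℝ) (f : X → EReal) : Prop where
  mem : ∀ n, g n ∈ S.L
  mono : Monotone g
  le_iSup : ∀ x, f x ≤ ⨆ n, (g n x : EReal)

namespace Majorizes

variable {S : IntegralSystem X} {f f' : X → EReal} {g g' : ℕ → X → ℝ} {h : X → ℝ}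

theorem iSup (hmem : ∀ n, g n ∈ S.L) (hmono : Monotone g) :
    Majorizes S g fun x => ⨆ n, (g n x : EReal) :=
  ⟨hmem, hmono, fun _ => le_rfl⟩

theorem const (hh : h ∈ S.L) : Majorizes S (fun _ => h) fun x => (h x : EReal) :=
  ⟨fun _ => hh, monotone_const, fun _ => le_iSup_of_le 0 le_rfl⟩

theorem mono_left (hg : Majorizes S g f) (h : ∀ x, f' x ≤ f x) : Majorizes S g f' :=
  ⟨hg.mem, hg.mono, fun x => (h x).trans (hg.le_iSup x)⟩

theorem add (hg : Majorizes S g f) (hg' : Majorizes S g' f') :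
    Majorizes S (fun n => g n + g' n) fun x => f x + f' x where
  mem n := S.add_mem (hg.mem n) (hg'.mem n)
  mono := hg.mono.add hg'.mono
  le_iSup x := (add_le_add (hg.le_iSup x) (hg'.le_iSup x)).trans
    (iSup_coe_add_iSup_coe_le (fun _ _ h => hg.mono h x) fun _ _ h => hg'.mono h x)

theorem sum {ι : Type*} {s : Finset ι} {v : ι → ℕ → X → ℝ} {u : ι → X → EReal}
    (hv : ∀ i ∈ s, Majorizes S (v i) (u i)) :
    Majorizes S (fun n => ∑ i ∈ s, v i n) fun x => ∑ i ∈ s, u i x := by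
  classical
  induction s using Finset.induction_on with
  | empty => exact const S.zero_mem
  | insert i s hi ih =>
    simp only [Finset.sum_insert hi]
    exact (hv i (Finset.mem_insert_self i s)).add
      (ih fun j hj => hv j (Finset.mem_insert_of_mem hj))

theorem const_mul (hg : Majorizes S g f) {r : ℝ} (hr : 0 < r) :
    Majorizes S (fun n => r • g n) fun x => r * f x where
  mem n := S.smul_mem r (hg.mem n)
  mono _ _ h x := mul_le_mul_of_nonneg_left (hg.mono h x) hr.le
  le_iSup x := by
    have hdiv {a b : EReal} : a ≤ b / r ↔ r * a ≤ b :=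
      mul_comm a r ▸ EReal.le_div_iff_mul_le (EReal.coe_pos.2 hr) (EReal.coe_ne_top r)
    refine hdiv.1 ((hg.le_iSup x).trans (iSup_le fun n => hdiv.2 ?_))
    exact _root_.le_iSup (fun n => ((r * g n x : ℝ) : EReal)) n

theorem tendsto_I_sub_sup_zero (hg : Majorizes S g fun x => (h x : EReal)) (hh : h ∈ S.L) :
    Tendsto (fun n => S.I ((h - g n) ⊔ 0)) atTop (𝓝 0) := by
  refine S.I_cont _ (fun n => S.sup_mem (sub_mem hh (hg.mem n)) S.zero_mem)
    (fun _ _ => le_sup_right)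
    (fun n => sup_le_sup_right (sub_le_sub_left (hg.mono n.le_succ) h) 0)
    fun x => tendsto_order.2 ⟨fun a ha => .of_forall fun n => ha.trans_le le_sup_right,
      fun a ha => ?_⟩
  have hlt : ((h x - a : ℝ) : EReal) < ⨆ n, (g n x : EReal) :=
    (EReal.coe_lt_coe_iff.2 (sub_lt_self _ ha)).trans_le (hg.le_iSup x)
  obtain ⟨N, hN⟩ := lt_iSup_iff.1 hlt
  filter_upwards [eventually_ge_atTop N] with n hn
  exact max_lt (sub_lt_comm.1 ((EReal.coe_lt_coe_iff.1 hN).trans_le (hg.mono hn x))) ha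

theorem I_le_iSup (hg : Majorizes S g fun x => (h x : EReal)) (hh : h ∈ S.L) :
    (S.I h : EReal) ≤ ⨆ n, (S.I (g n) : EReal) := by
  refine EReal.le_of_forall_lt_iff_le.1 fun c hc => EReal.coe_le_coe_iff.2 ?_
  have hlim : Tendsto (fun n => c + S.I ((h - g n) ⊔ 0)) atTop (𝓝 c) := by
    simpa only [add_zero] using (hg.tendsto_I_sub_sup_zero hh).const_add c
  refine ge_of_tendsto' hlim fun n => ?_
  have hgc : S.I (g n) ≤ c :=
    EReal.coe_le_coe_iff.1 ((_root_.le_iSup (fun n => (S.I (g n) : EReal)) n).trans hc.le)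
  have hsub : S.I h - S.I (g n) ≤ S.I ((h - g n) ⊔ 0) :=
    I_sub hh (hg.mem n) ▸ I_mono (sub_mem hh (hg.mem n))
      (S.sup_mem (sub_mem hh (hg.mem n)) S.zero_mem) le_sup_left
  linarith

theorem sup_zero (hg : Majorizes S g f) : Majorizes S (fun n => g n ⊔ 0) f where
  mem n := S.sup_mem (hg.mem n) S.zero_mem
  mono _ _ h := sup_le_sup_right (hg.mono h) 0
  le_iSup x := (hg.le_iSup x).trans (iSup_mono fun _ => EReal.coe_le_coe_iff.2 le_sup_left)

theorem I_sup_zero_le_iSup (hg : Majorizes S g f) (hf : ∀ x, 0 ≤ f x) (n : ℕ) :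
    (S.I (g n ⊔ 0) : EReal) ≤ ⨆ n, (S.I (g n) : EReal) := by
  refine I_le_iSup ⟨hg.mem, hg.mono, fun x => ?_⟩ (hg.sup_zero.mem n)
  rw [Pi.sup_apply, EReal.coe_strictMono.monotone.map_sup]
  exact sup_le (_root_.le_iSup (fun n => (g n x : EReal)) n) ((hf x).trans (hg.le_iSup x))

end Majorizes

section UpperIntegral

variable {S : IntegralSystem X} {f f' : X → EReal}

theorem Iup_iSup_eq {g : ℕ → X → ℝ} (hmem : ∀ n, g n ∈ S.L) (hmono : Monotone g) :
    Iup S (fun x => ⨆ n, (g n x : EReal)) = ⨆ n, (S.I (g n) : EReal) := by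
  apply le_antisymm
  · refine sSup_le ?_
    rintro c ⟨k, hk, hk_succ, hk_lim, hc⟩
    refine le_of_tendsto' hc fun m => Majorizes.I_le_iSup ⟨hmem, hmono, fun x => ?_⟩ (hk m)
    exact Monotone.ge_of_tendsto
      (monotone_nat_of_le_succ fun n => EReal.coe_le_coe_iff.2 (hk_succ n x)) (hk_lim x) m
  · exact le_sSup ⟨g, hmem, fun n => hmono n.le_succ,
      fun x => tendsto_coe_iSup fun _ _ h => hmono h x,
      tendsto_coe_iSup fun m n h => I_mono (hmem m) (hmem n) (hmono h)⟩

theorem upperInt_eq_iInf (S : IntegralSystem X) (f : X → EReal) :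
    upperInt S f = ⨅ (g : ℕ → X → ℝ) (_ : Majorizes S g f), ⨆ n, (S.I (g n) : EReal) := by
  apply le_antisymm
  · refine le_iInf₂ fun g hg => ?_
    rw [← Iup_iSup_eq hg.mem hg.mono]
    exact sInf_le ⟨_, ⟨⟨g, hg.mem, fun n => hg.mono n.le_succ,
      fun x => tendsto_coe_iSup fun _ _ h => hg.mono h x⟩, hg.le_iSup⟩, rfl⟩
  · refine le_sInf ?_
    rintro _ ⟨φ, ⟨⟨g, hmem, hsucc, hlim⟩, hfφ⟩, rfl⟩
    have hmono : Monotone g := monotone_nat_of_le_succ hsucc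
    obtain rfl : φ = fun x => ⨆ n, (g n x : EReal) :=
      funext fun x => tendsto_nhds_unique (hlim x) (tendsto_coe_iSup fun _ _ h => hmono h x)
    rw [Iup_iSup_eq hmem hmono]
    exact iInf₂_le g ⟨hmem, hmono, hfφ⟩

theorem Majorizes.upperInt_le {g : ℕ → X → ℝ} (hg : Majorizes S g f) :
    upperInt S f ≤ ⨆ n, (S.I (g n) : EReal) :=
  upperInt_eq_iInf S f ▸ iInf₂_le g hg

theorem exists_majorizes_of_upperInt_lt {c : EReal} (h : upperInt S f < c) :
    ∃ g, Majorizes S g f ∧ ⨆ n, (S.I (g n) : EReal) < c := by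
  simpa only [upperInt_eq_iInf, iInf_lt_iff, exists_prop] using h

theorem upperInt_le_coe_iff {c : ℝ} :
    upperInt S f ≤ c ↔ ∀ ε > 0, ∃ g, Majorizes S g f ∧ ∀ n, S.I (g n) ≤ c + ε := by
  constructor
  · intro h ε hε
    obtain ⟨g, hg, hI⟩ := exists_majorizes_of_upperInt_lt
      (h.trans_lt (EReal.coe_lt_coe_iff.2 (lt_add_of_pos_right c hε)))
    exact ⟨g, hg, fun n => EReal.coe_le_coe_iff.1 (iSup_le_iff.1 hI.le n)⟩
  · intro h
    refine EReal.le_of_forall_lt_iff_le.1 fun z hz => ?_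
    obtain ⟨g, hg, hI⟩ := h (z - c) (sub_pos.2 (EReal.coe_lt_coe_iff.1 hz))
    exact hg.upperInt_le.trans (iSup_le fun n =>
      EReal.coe_le_coe_iff.2 ((hI n).trans_eq (add_sub_cancel c z)))

theorem upperInt_mono (h : ∀ x, f x ≤ f' x) : upperInt S f ≤ upperInt S f' :=
  sInf_le_sInf (Set.image_mono fun _ hg => ⟨hg.1, fun x => (h x).trans (hg.2 x)⟩)

theorem upperInt_nonneg (hf : ∀ x, 0 ≤ f x) : 0 ≤ upperInt S f := by
  rw [upperInt_eq_iInf]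
  refine le_iInf₂ fun g hg => ?_
  exact (EReal.coe_nonneg.2 S.I_zero.ge).trans ((hg.mono_left hf).I_le_iSup S.zero_mem)

-- Where the values are `⊤` and `⊥`, the sum is `⊥` by the convention of `EReal`.
theorem upperInt_add_le {c c' : ℝ} (h : upperInt S f ≤ c) (h' : upperInt S f' ≤ c') :
    upperInt S (fun x => f x + f' x) ≤ ((c + c' : ℝ) : EReal) := by
  refine upperInt_le_coe_iff.2 fun ε hε => ?_
  obtain ⟨g, hg, hc⟩ := upperInt_le_coe_iff.1 h (ε / 2) (half_pos hε)
  obtain ⟨g', hg', hc'⟩ := upperInt_le_coe_iff.1 h' (ε / 2) (half_pos hε)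
  refine ⟨_, hg.add hg', fun n => ?_⟩
  rw [S.I_add (hg.mem n) (hg'.mem n)]
  linarith [hc n, hc' n]

theorem upperInt_const_mul_le {c r : ℝ} (h : upperInt S f ≤ c) (hr : 0 < r) :
    upperInt S (fun x => r * f x) ≤ ((r * c : ℝ) : EReal) := by
  refine upperInt_le_coe_iff.2 fun ε hε => ?_
  obtain ⟨g, hg, hc⟩ := upperInt_le_coe_iff.1 h (ε / r) (div_pos hε hr)
  refine ⟨_, hg.const_mul hr, fun n => ?_⟩
  calc S.I (r • g n) = r * S.I (g n) := S.I_smul r (hg.mem n)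
    _ ≤ r * (c + ε / r) := mul_le_mul_of_nonneg_left (hc n) hr.le
    _ = r * c + ε := by rw [mul_add, mul_div_cancel₀ ε hr.ne']

theorem upperInt_iSup_sum_le {u : ℕ → X → EReal} {c : ℕ → ℝ} {C : ℝ}
    (hu_nonneg : ∀ k x, 0 ≤ u k x) (hu : ∀ k, upperInt S (u k) ≤ c k)
    (hC : ∀ n, ∑ k ∈ Finset.range n, c k ≤ C) :
    upperInt S (fun x => ⨆ n, ∑ k ∈ Finset.range n, u k x) ≤ C := by
  refine upperInt_le_coe_iff.2 fun ε hε => ?_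
  choose v hv hI using fun k =>
    upperInt_le_coe_iff.1 (hu k) (ε / 2 * (1 / 2) ^ k) (by positivity)
  -- Truncating at `0` makes the partial sums `w N n` increase in `N` as well, so that the diagonal
  -- sequence `w n n` majorizes the whole series.
  let w N n := ∑ k ∈ Finset.range N, (v k n ⊔ 0)
  have hw_mem N n : w N n ∈ S.L := sum_mem fun k _ => (hv k).sup_zero.mem n
  have hw_mono {N N' n n' : ℕ} (hN : N ≤ N') (hn : n ≤ n') : w N n ≤ w N' n' :=
    (Finset.sum_le_sum fun k _ => (hv k).sup_zero.mono hn).trans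
      (Finset.sum_le_sum_of_subset_of_nonneg (Finset.range_subset_range.2 hN)
        fun _ _ _ => le_sup_right)
  refine ⟨fun n => w n n, ⟨fun n => hw_mem n n, fun _ _ h => hw_mono h h,
    fun x => iSup_le fun N => ?_⟩, fun n => ?_⟩
  · refine ((Majorizes.sum fun k _ => (hv k).sup_zero).le_iSup x).trans (iSup_le fun n => ?_)
    exact le_iSup_of_le (max N n)
      (EReal.coe_le_coe_iff.2 (hw_mono (le_max_left N n) (le_max_right N n) x))
  · have hI₀ k : S.I (v k n ⊔ 0) ≤ c k + ε / 2 * (1 / 2) ^ k :=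
      EReal.coe_le_coe_iff.1 (((hv k).I_sup_zero_le_iSup (hu_nonneg k) n).trans
        (iSup_le fun m => EReal.coe_le_coe_iff.2 (hI k m)))
    calc S.I (w n n) = ∑ k ∈ Finset.range n, S.I (v k n ⊔ 0) :=
          I_sum fun k _ => (hv k).sup_zero.mem n
      _ ≤ ∑ k ∈ Finset.range n, (c k + ε / 2 * (1 / 2) ^ k) := Finset.sum_le_sum fun k _ => hI₀ k
      _ = ∑ k ∈ Finset.range n, c k + ε / 2 * ∑ k ∈ Finset.range n, (1 / 2 : ℝ) ^ k := by
          rw [Finset.sum_add_distrib, Finset.mul_sum]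
      _ ≤ C + ε / 2 * 2 :=
          add_le_add (hC n) (mul_le_mul_of_nonneg_left (sum_geometric_two_le n) (half_pos hε).le)
      _ = C + ε := by rw [div_mul_cancel₀ ε two_ne_zero]

theorem lowerInt_eq_neg_upperInt_neg (S : IntegralSystem X) (f : X → EReal) :
    lowerInt S f = -upperInt S fun x => -f x := by
  apply le_antisymm
  · refine sSup_le ?_
    rintro _ ⟨g, ⟨hg, hgf⟩, rfl⟩
    exact EReal.neg_le_neg_iff.2 (sInf_le ⟨_, ⟨hg, fun x => EReal.neg_le_neg_iff.2 (hgf x)⟩, rfl⟩)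
  · refine EReal.neg_le.1 (le_sInf ?_)
    rintro _ ⟨g, ⟨hg, hfg⟩, rfl⟩
    refine EReal.neg_le.1 (le_sSup ⟨fun x => -g x, ⟨?_, fun x => EReal.neg_le.1 (hfg x)⟩, ?_⟩)
    · simpa only [MemLdown, neg_neg] using hg
    · simp only [Idown, neg_neg]

theorem lowerInt_le_upperInt (S : IntegralSystem X) (f : X → EReal) :
    lowerInt S f ≤ upperInt S f := by
  rw [lowerInt_eq_neg_upperInt_neg]
  refine EReal.le_of_forall_lt_iff_le.1 fun c hc => EReal.neg_le.1
    (EReal.le_of_forall_lt_iff_le.1 fun d hd => ?_)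
  obtain ⟨g, hg, hgc⟩ := exists_majorizes_of_upperInt_lt hc
  obtain ⟨k, hk, hkd⟩ := exists_majorizes_of_upperInt_lt hd
  have hbot {u : ℕ → ℝ} : ⨆ n, (u n : EReal) ≠ ⊥ :=
    ((EReal.bot_lt_coe (u 0)).trans_le (le_iSup (fun n => (u n : EReal)) 0)).ne'
  have hnonneg x : 0 ≤ (⨆ n, (g n x : EReal)) + ⨆ n, (k n x : EReal) := by
    have hneg : -(⨆ n, (k n x : EReal)) ≤ ⨆ n, (g n x : EReal) :=
      (EReal.neg_le.1 (hk.le_iSup x)).trans (hg.le_iSup x)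
    simpa only [sub_eq_add_neg, neg_neg] using (EReal.sub_nonneg
      (.inr (EReal.neg_eq_top_iff.not.2 hbot)) (.inl hbot)).2 hneg
  have hsum := (upperInt_nonneg hnonneg).trans (upperInt_add_le
    ((Majorizes.iSup hg.mem hg.mono).upperInt_le.trans hgc.le)
    ((Majorizes.iSup hk.mem hk.mono).upperInt_le.trans hkd.le))
  rw [← EReal.coe_neg]
  exact EReal.coe_le_coe_iff.2 (neg_le_iff_add_nonneg'.2 (EReal.coe_nonneg.1 hsum))

end UpperIntegral

/-- `f` is `I`-integrable with integral `c`: the relational form of `Integrable1` and `Int1`, which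
lets integrability and the value of the integral be proved together. -/
def HasIntegral (S : IntegralSystem X) (f : X → ℝ) (c : ℝ) : Prop :=
  lowerInt S (fun x => (f x : EReal)) = c ∧ upperInt S (fun x => (f x : EReal)) = c

section HasIntegral

variable {S : IntegralSystem X} {f g : X → ℝ} {c d : ℝ}

theorem coe_le_lowerInt_coe_iff : c ≤ lowerInt S (fun x => (f x : EReal)) ↔
    upperInt S (fun x => ((-f x : ℝ) : EReal)) ≤ ((-c : ℝ) : EReal) := by
  simp only [lowerInt_eq_neg_upperInt_neg, EReal.coe_neg, EReal.le_neg]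

theorem hasIntegral_iff : HasIntegral S f c ↔
    upperInt S (fun x => (f x : EReal)) ≤ c ∧
      upperInt S (fun x => ((-f x : ℝ) : EReal)) ≤ ((-c : ℝ) : EReal) := by
  rw [← coe_le_lowerInt_coe_iff]
  have hle := lowerInt_le_upperInt S fun x => (f x : EReal)
  exact ⟨fun h => ⟨h.2.le, h.1.ge⟩,
    fun h => ⟨(hle.trans h.1).antisymm h.2, h.1.antisymm (h.2.trans hle)⟩⟩

namespace HasIntegral

theorem of_mem (hf : f ∈ S.L) : HasIntegral S f (S.I f) := by
  refine hasIntegral_iff.2 ⟨(Majorizes.const hf).upperInt_le.trans iSup_const_le, ?_⟩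
  rw [← I_neg hf]
  exact (Majorizes.const (neg_mem hf)).upperInt_le.trans iSup_const_le

theorem integrable1 (hf : HasIntegral S f c) : Integrable1 S f := ⟨c, hf⟩

theorem int1_eq (hf : HasIntegral S f c) : Int1 S f = c := by
  rw [Int1, hf.2, EReal.toReal_coe]

theorem neg (hf : HasIntegral S f c) : HasIntegral S (-f) (-c) :=
  hasIntegral_iff.2 ⟨(hasIntegral_iff.1 hf).2,
    by simpa only [Pi.neg_apply, neg_neg] using (hasIntegral_iff.1 hf).1⟩

theorem add (hf : HasIntegral S f c) (hg : HasIntegral S g d) :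
    HasIntegral S (f + g) (c + d) := by
  rw [hasIntegral_iff] at hf hg ⊢
  simp only [Pi.add_apply, neg_add]
  exact ⟨upperInt_add_le hf.1 hg.1, upperInt_add_le hf.2 hg.2⟩

theorem sub (hf : HasIntegral S f c) (hg : HasIntegral S g d) :
    HasIntegral S (f - g) (c - d) := by
  simpa only [sub_eq_add_neg] using hf.add hg.neg

theorem smul_of_pos (hf : HasIntegral S f c) {r : ℝ} (hr : 0 < r) :
    HasIntegral S (r • f) (r * c) := by
  rw [hasIntegral_iff] at hf ⊢
  simp only [Pi.smul_apply, smul_eq_mul, ← mul_neg]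
  exact ⟨upperInt_const_mul_le hf.1 hr, upperInt_const_mul_le hf.2 hr⟩

theorem smul (hf : HasIntegral S f c) (r : ℝ) : HasIntegral S (r • f) (r * c) := by
  rcases lt_trichotomy r 0 with hr | rfl | hr
  · simpa only [neg_smul, neg_mul, neg_neg] using (hf.smul_of_pos (neg_pos.2 hr)).neg
  · simpa only [zero_smul, zero_mul, I_zero] using of_mem S.zero_mem
  · exact hf.smul_of_pos hr

theorem mono (hf : HasIntegral S f c) (hg : HasIntegral S g d) (hfg : f ≤ g) : c ≤ d :=
  EReal.coe_le_coe_iff.1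
    (hf.2 ▸ hg.2 ▸ upperInt_mono fun x => EReal.coe_le_coe_iff.2 (hfg x))

theorem nonneg (hf : HasIntegral S f c) (h : 0 ≤ f) : 0 ≤ c :=
  S.I_zero ▸ (of_mem S.zero_mem).mono hf h

theorem exists_upperInt_abs_sub_le (hf : HasIntegral S f c) {ε : ℝ} (hε : 0 < ε) :
    ∃ h ∈ S.L, upperInt S (fun x => ((|f x - h x| : ℝ) : EReal)) ≤ ε := by
  obtain ⟨g, hg, hI⟩ := upperInt_le_coe_iff.1 hf.2.le (ε / 3) (by positivity)
  obtain ⟨n, hn⟩ : ∃ n, c - ε / 3 < S.I (g n) := by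
    by_contra! hle
    have := hf.2 ▸ hg.upperInt_le.trans (iSup_le fun n => EReal.coe_le_coe_iff.2 (hle n))
    linarith [EReal.coe_le_coe_iff.1 this]
  refine ⟨g n, hg.mem n, ?_⟩
  let φ x := ⨆ n, (g n x : EReal)
  have hφ : upperInt S φ ≤ ((c + ε / 3 : ℝ) : EReal) :=
    (Majorizes.iSup hg.mem hg.mono).upperInt_le.trans
      (iSup_le fun n => EReal.coe_le_coe_iff.2 (hI n))
  have hφf := upperInt_add_le hφ (hasIntegral_iff.1 hf).2
  have hφg := upperInt_add_le hφ (hasIntegral_iff.1 (of_mem (hg.mem n))).2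
  have habs x : ((|f x - g n x| : ℝ) : EReal) ≤
      (φ x + ((-f x : ℝ) : EReal)) + (φ x + ((-g n x : ℝ) : EReal)) := by
    have hf_le : (f x : EReal) ≤ φ x := hg.le_iSup x
    have hg_le : (g n x : EReal) ≤ φ x := le_iSup (fun n => (g n x : EReal)) n
    generalize φ x = a at hf_le hg_le ⊢
    induction a with
    | bot => exact absurd hf_le (EReal.bot_lt_coe _).not_ge
    | top => simp only [EReal.top_add_coe, EReal.top_add_top, le_top]
    | coe a =>
      norm_cast at hf_le hg_le ⊢
      exact abs_le.2 ⟨by linarith, by linarith⟩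
  refine (upperInt_mono habs).trans ((upperInt_add_le hφf hφg).trans ?_)
  exact EReal.coe_le_coe_iff.2 (by linarith)

end HasIntegral

theorem Integrable1.hasIntegral (hf : Integrable1 S f) : HasIntegral S f (Int1 S f) := by
  obtain ⟨c, hc⟩ := hf
  exact (HasIntegral.int1_eq hc).symm ▸ hc

theorem integrable1_iff_forall_exists_mem : Integrable1 S f ↔
    ∀ ε > 0, ∃ h ∈ S.L, upperInt S (fun x => ((|f x - h x| : ℝ) : EReal)) ≤ (ε : ℝ) := by
  refine ⟨fun hf ε hε => hf.hasIntegral.exists_upperInt_abs_sub_le hε,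
    fun H => exists_coe_eq_of_forall_pos (lowerInt_le_upperInt S _) fun ε hε => ?_⟩
  obtain ⟨h, hh, hle⟩ := H ε hε
  have hI := hasIntegral_iff.1 (HasIntegral.of_mem hh)
  refine ⟨S.I h, coe_le_lowerInt_coe_iff.2 ?_, ?_⟩
  · rw [neg_sub', sub_neg_eq_add]
    refine (upperInt_mono fun x => ?_).trans (upperInt_add_le hI.2 hle)
    exact EReal.coe_le_coe_iff.2 (by linarith [neg_le_abs (f x - h x)])
  · refine (upperInt_mono fun x => ?_).trans (upperInt_add_le hI.1 hle)
    exact EReal.coe_le_coe_iff.2 (by linarith [le_abs_self (f x - h x)])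

theorem Integrable1.map₂ {φ : ℝ → ℝ → ℝ}
    (hφ : ∀ a b a' b', |φ a b - φ a' b'| ≤ |a - a'| + |b - b'|)
    (hφ_mem : ∀ ⦃h k : X → ℝ⦄, h ∈ S.L → k ∈ S.L → (fun x => φ (h x) (k x)) ∈ S.L)
    (hf : Integrable1 S f) (hg : Integrable1 S g) :
    Integrable1 S fun x => φ (f x) (g x) := by
  rw [integrable1_iff_forall_exists_mem] at hf hg ⊢
  intro ε hε
  obtain ⟨h, hh, hfh⟩ := hf (ε / 2) (half_pos hε)
  obtain ⟨k, hk, hgk⟩ := hg (ε / 2) (half_pos hε)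
  refine ⟨_, hφ_mem hh hk, (upperInt_mono fun x => ?_).trans
    ((upperInt_add_le hfh hgk).trans_eq (by rw [add_halves]))⟩
  exact EReal.coe_le_coe_iff.2 (hφ (f x) (g x) (h x) (k x))

theorem Integrable1.sup (hf : Integrable1 S f) (hg : Integrable1 S g) : Integrable1 S (f ⊔ g) :=
  hf.map₂ (fun a b a' b' => (abs_max_sub_max_le_max a b a' b').trans
    (max_le_add_of_nonneg (abs_nonneg _) (abs_nonneg _))) S.sup_mem hg

theorem Integrable1.inf (hf : Integrable1 S f) (hg : Integrable1 S g) : Integrable1 S (f ⊓ g) :=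
  hf.map₂ (fun a b a' b' => (abs_min_sub_min_le_max a b a' b').trans
    (max_le_add_of_nonneg (abs_nonneg _) (abs_nonneg _))) S.inf_mem hg

theorem coe_eq_sum_range_coe_sub_add (a : ℕ → ℝ) (n : ℕ) :
    (a n : EReal) = ∑ k ∈ Finset.range n, ((a (k + 1) - a k : ℝ) : EReal) + a 0 := by
  induction n with
  | zero => simp only [Finset.range_zero, Finset.sum_empty, zero_add]
  | succ n ih =>
    rw [Finset.sum_range_succ, add_right_comm, ← ih, ← EReal.coe_add, add_sub_cancel]

theorem upperInt_le_iSup_of_hasIntegral {f : X → EReal} {g : ℕ → X → ℝ} {c : ℕ → ℝ}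
    (hg : ∀ n, HasIntegral S (g n) (c n)) (hmono : Monotone g)
    (hf : ∀ x, f x ≤ ⨆ n, (g n x : EReal)) : upperInt S f ≤ ⨆ n, (c n : EReal) := by
  refine EReal.le_of_forall_lt_iff_le.1 fun C hC => ?_
  have hcC n : c n ≤ C := EReal.coe_le_coe_iff.1 (iSup_le_iff.1 hC.le n)
  let σ n x := ∑ k ∈ Finset.range n, ((g (k + 1) x - g k x : ℝ) : EReal)
  have hσ : upperInt S (fun x => ⨆ n, σ n x) ≤ ((C - c 0 : ℝ) : EReal) := by
    refine upperInt_iSup_sum_le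
      (fun k x => EReal.coe_nonneg.2 (sub_nonneg.2 (hmono k.le_succ x)))
      (fun k => ((hg (k + 1)).sub (hg k)).2.le) fun n => ?_
    rw [Finset.sum_range_sub]
    exact sub_le_sub_right (hcC n) (c 0)
  have hfσ x : f x ≤ (⨆ n, σ n x) + g 0 x := (hf x).trans <| iSup_le fun n =>
    coe_eq_sum_range_coe_sub_add (fun n => g n x) n ▸
      add_le_add_left (le_iSup (fun n => σ n x) n) _
  calc upperInt S f ≤ upperInt S fun x => (⨆ n, σ n x) + g 0 x := upperInt_mono hfσ
    _ ≤ ((C - c 0 + c 0 : ℝ) : EReal) := upperInt_add_le hσ (hg 0).2.le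
    _ = C := by rw [sub_add_cancel]

theorem tendsto_int1_of_antitone {g : ℕ → X → ℝ} (hg : ∀ n, Integrable1 S (g n))
    (hanti : Antitone g) (hnonneg : ∀ n, 0 ≤ g n)
    (hlim : ∀ x, Tendsto (fun n => g n x) atTop (𝓝 0)) :
    Tendsto (fun n => Int1 S (g n)) atTop (𝓝 0) := by
  have hI n := (hg n).hasIntegral
  have hI_anti : Antitone fun n => Int1 S (g n) := fun m n h => (hI n).mono (hI m) (hanti h)
  have hI_nonneg n : 0 ≤ Int1 S (g n) := (hI n).nonneg (hnonneg n)
  have hbdd : BddBelow (Set.range fun n => Int1 S (g n)) := ⟨0, Set.forall_mem_range.2 hI_nonneg⟩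
  suffices hinf : ⨅ n, Int1 S (g n) = 0 from hinf ▸ tendsto_atTop_ciInf hI_anti hbdd
  refine le_antisymm ?_ (le_ciInf hI_nonneg)
  have hsup x : (g 0 x : EReal) ≤ ⨆ n, ((g 0 - g n) x : EReal) := by
    have : Tendsto (fun n => ((g 0 - g n) x : EReal)) atTop (𝓝 (g 0 x : EReal)) := by
      simpa only [sub_zero, Pi.sub_apply] using
        EReal.tendsto_coe.2 ((hlim x).const_sub (g 0 x))
    exact le_of_tendsto' this fun n => le_iSup (fun n => ((g 0 - g n) x : EReal)) n
  have hle : (Int1 S (g 0) : EReal) ≤ ((Int1 S (g 0) - ⨅ n, Int1 S (g n) : ℝ) : EReal) := by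
    rw [← (hI 0).2]
    refine (upperInt_le_iSup_of_hasIntegral (fun n => (hI 0).sub (hI n))
      (fun m n h => sub_le_sub_left (hanti h) _) hsup).trans (iSup_le fun n => ?_)
    exact EReal.coe_le_coe_iff.2 (sub_le_sub_left (ciInf_le hbdd n) _)
  linarith [EReal.coe_le_coe_iff.1 hle]

end HasIntegral

attribute [ext] IntegralSystem

/-- The Daniell extension `(L¹, I¹)` of `(L, I)`. -/
noncomputable def daniellExtension (S : IntegralSystem X) : IntegralSystem X where
  L := {f | Integrable1 S f}
  I := Int1 S
  zero_mem := (HasIntegral.of_mem S.zero_mem).integrable1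
  add_mem _ _ hf hg := (hf.hasIntegral.add hg.hasIntegral).integrable1
  smul_mem r _ hf := (hf.hasIntegral.smul r).integrable1
  sup_mem _ _ hf hg := hf.sup hg
  inf_mem _ _ hf hg := hf.inf hg
  I_add _ _ hf hg := (hf.hasIntegral.add hg.hasIntegral).int1_eq
  I_smul r _ hf := (hf.hasIntegral.smul r).int1_eq
  I_pos _ hf h := hf.hasIntegral.nonneg h
  I_cont _ hf hnonneg hanti hlim :=
    tendsto_int1_of_antitone hf (antitone_nat_of_succ_le hanti) hnonneg hlim

theorem Majorizes.daniellExtension {S : IntegralSystem X} {g : ℕ → X → ℝ} {f : X → EReal}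
    (hg : Majorizes S g f) : Majorizes (daniellExtension S) g f :=
  ⟨fun n => (HasIntegral.of_mem (hg.mem n)).integrable1, hg.mono, hg.le_iSup⟩

theorem upperInt_daniellExtension (S : IntegralSystem X) (f : X → EReal) :
    upperInt (daniellExtension S) f = upperInt S f := by
  apply le_antisymm
  · rw [upperInt_eq_iInf S]
    refine le_iInf₂ fun g hg => hg.daniellExtension.upperInt_le.trans_eq ?_
    exact iSup_congr fun n => congrArg _ (HasIntegral.of_mem (hg.mem n)).int1_eq
  · rw [upperInt_eq_iInf (daniellExtension S)]
    exact le_iInf₂ fun g hg => upperInt_le_iSup_of_hasIntegral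
      (fun n => (hg.mem n : Integrable1 S (g n)).hasIntegral) hg.mono hg.le_iSup

theorem lowerInt_daniellExtension (S : IntegralSystem X) (f : X → EReal) :
    lowerInt (daniellExtension S) f = lowerInt S f := by
  simp only [lowerInt_eq_neg_upperInt_neg, upperInt_daniellExtension]

/-- Maximality of the Daniell extension: `(L¹, I¹)` is again an integral system, its
upper and lower integrals coincide with those of `(L, I)`, and consequently its Daniell
extension is `(L¹, I¹)` itself. -/
theorem daniell_extension_maximal (S : IntegralSystem X) :
    (∃ S' : IntegralSystem X,
      S'.L = { f | Integrable1 S f } ∧ ∀ f : X → ℝ, S'.I f = Int1 S f) ∧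
    (∀ S' : IntegralSystem X,
      S'.L = { f | Integrable1 S f } → (∀ f : X → ℝ, S'.I f = Int1 S f) →
      (∀ f : X → EReal, upperInt S' f = upperInt S f ∧ lowerInt S' f = lowerInt S f) ∧
      (∀ f : X → ℝ, (Integrable1 S' f ↔ Integrable1 S f) ∧ Int1 S' f = Int1 S f)) := by
  refine ⟨⟨daniellExtension S, rfl, fun _ => rfl⟩, fun S' hL hI => ?_⟩
  obtain rfl : S' = daniellExtension S := IntegralSystem.ext hL (funext hI)
  refine ⟨fun f => ⟨upperInt_daniellExtension S f, lowerInt_daniellExtension S f⟩, fun f => ?_⟩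
  simp only [Integrable1, Int1, upperInt_daniellExtension, lowerInt_daniellExtension, and_self]
end

section
/- (Frullani integral.) Let f : ℝ → ℝ be a measurable function that is Lebesgue integrable on [x,y] for all 0 < x ≤ y < ∞, and assume the limits f(0+) = lim_{t→0+} f(t) and f(∞) = lim_{t→∞} f(t) exist. Then for all reals 0 < a < b, the improper integral ∫_0^∞ (f(bt) − f(at))/t dt converges, i.e., the limit of ∫_x^y (f(bt) − f(at))/t dt as x → 0+ and y → ∞ exists, and its value is (f(∞) − f(0+))·log(b/a). -/
open Filter Topology MeasureTheory

theorem locallyIntegrableOn_of_forall_integrableOn_Icc {X ε : Type*} [LinearOrder X]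
    [TopologicalSpace X] [OrderTopology X] [MeasurableSpace X] [TopologicalSpace ε]
    [ContinuousENorm ε] {f : X → ε} {s : Set X} {μ : Measure X} (hs : IsOpen s)
    (hf : ∀ x y, x ≤ y → Set.Icc x y ⊆ s → IntegrableOn f (Set.Icc x y) μ) :
    LocallyIntegrableOn f s μ := by
  intro c hc
  obtain ⟨x, y, hcxy, hnhds, hsub⟩ := exists_Icc_mem_subset_of_mem_nhds (hs.mem_nhds hc)
  exact ⟨Set.Icc x y, mem_nhdsWithin_of_mem_nhds hnhds, hf x y (hcxy.1.trans hcxy.2) hsub⟩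

theorem frullani_integral_general {E : Type*} [NormedAddCommGroup E] [NormedSpace ℝ E]
    [CompleteSpace E] {f : ℝ → E} {f0 finf : E} {a b : ℝ}
    (hint : ∀ x y : ℝ, 0 < x → x ≤ y → IntegrableOn f (Set.Icc x y))
    (h0 : Tendsto f (𝓝[>] (0 : ℝ)) (𝓝 f0)) (hinf : Tendsto f atTop (𝓝 finf))
    (ha : 0 < a) (hb : 0 < b) :
    Tendsto (fun p : ℝ × ℝ => ∫ t in p.1..p.2, t⁻¹ • (f (b * t) - f (a * t)))
      ((𝓝[>] (0 : ℝ)) ×ˢ atTop) (𝓝 (Real.log (b / a) • (finf - f0))) := by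
  have hloc : LocallyIntegrableOn f (Set.Ioi 0) :=
    locallyIntegrableOn_of_forall_integrableOn_Icc isOpen_Ioi fun x y hxy hsub =>
      hint x y (hsub (Set.left_mem_Icc.mpr hxy)) hxy
  have hswap : Real.log (b / a) • (finf - f0) = Real.log (a / b) • (f0 - finf) := by
    rw [← inv_div, Real.log_inv, neg_smul, ← smul_neg, neg_sub]
  rw [hswap]
  exact Frullani.tendsto_intervalIntegral hloc hb ha h0 hinf

/-- Frullani's integral: if `f` is measurable, integrable on every `[x,y] ⊂ (0,∞)`, and has
limits `f0 = lim_{t→0+} f t` and `finf = lim_{t→∞} f t`, then for `0 < a < b` the improper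
integral `∫_0^∞ (f (b t) − f (a t))/t dt` converges (as `x → 0+`, `y → ∞` of `∫_x^y`) with
value `(finf − f0) · log (b/a)`. -/
theorem frullani_integral (f : ℝ → ℝ) (hmeas : Measurable f)
    (hint : ∀ x y : ℝ, 0 < x → x ≤ y → IntegrableOn f (Set.Icc x y))
    (f0 finf : ℝ)
    (h0 : Tendsto f (𝓝[>] (0 : ℝ)) (𝓝 f0))
    (hinf : Tendsto f atTop (𝓝 finf))
    (a b : ℝ) (ha : 0 < a) (hab : a < b) :
    Tendsto (fun p : ℝ × ℝ => ∫ t in p.1..p.2, (f (b * t) - f (a * t)) / t)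
      ((𝓝[>] (0 : ℝ)) ×ˢ atTop) (𝓝 ((finf - f0) * Real.log (b / a))) := by
  simpa only [smul_eq_mul, inv_mul_eq_div, mul_comm (Real.log _)] using
    frullani_integral_general hint h0 hinf ha (ha.trans hab)
end

section
/- Let d ≥ 1 be an integer and let γ, β, M be reals with 0 < γ < d, β + γ > d and M > 0. Let ρ : ℝ^d → ℝ be a measurable function satisfying |ρ(y)| ≤ M·(1 + |y|)^{−β} for all y ∈ ℝ^d. Then for every x ∈ ℝ^d the function y ↦ ρ(y)/|x − y|^γ is Lebesgue integrable on ℝ^d, and the potential φ_γ(x) = ∫_{ℝ^d} ρ(y)/|x − y|^γ dy is of class C^n on ℝ^d, where n ≥ 0 is the largest integer with n < d − γ. -/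
open MeasureTheory

/-!
The potential is the convolution of `ρ` with the kernel `‖z‖ ^ (-γ)`, which is smooth away from the
origin and homogeneous of degree `-γ`. Cut such a kernel at the unit sphere. Its inner part is
integrable because `γ < d`, and convolving an `L^∞` function with an `L^1` function gives a
continuous function, as one sees by approximating the latter by continuous compactly supported
functions. Its outer part is comparable to `(1 + ‖z‖) ^ (-γ)`, and Peetre's inequality
`(1 + ‖x - y‖) ^ (-γ) ≤ (1 + ‖x‖) ^ γ * (1 + ‖y‖) ^ (-γ)` supplies a dominating function.

The partial derivatives of the kernel are homogeneous of degree `-(γ + 1)`, so as long as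
`γ + 1 < d` their convolutions with `ρ` are continuous as well. They are the partial derivatives of
the potential: as `d ≥ 2`, almost every `y` avoids the line through `x` in a given direction, so
the fundamental theorem of calculus holds for the kernel along that line and can be integrated
against `ρ` by Fubini. Now induct on the order of differentiability.
-/

open Asymptotics ContinuousLinearMap Filter Metric Module Set Topology
open scoped Convolution ENNReal

section SegmentIntegral

variable {E F : Type*} [NormedAddCommGroup E] [NormedSpace ℝ E] [NormedAddCommGroup F]
  [NormedSpace ℝ F] [CompleteSpace F] {f : E → F} {f' : E → E →L[ℝ] F} {x : E}

lemma sub_eq_integral_of_hasFDerivAt_line {v : E}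
    (hf : ∀ t : ℝ, HasFDerivAt f (f' (x + t • v)) (x + t • v))
    (hf' : Continuous fun t : ℝ ↦ f' (x + t • v)) :
    f (x + v) - f x = ∫ t in (0 : ℝ)..1, f' (x + t • v) v := by
  have h_line (t : ℝ) : HasDerivAt (fun t : ℝ ↦ x + t • v) v t := by
    simpa using ((hasDerivAt_id t).smul_const v).const_add x
  rw [intervalIntegral.integral_eq_sub_of_hasDerivAt
    (fun t _ ↦ (hf t).comp_hasDerivAt t (h_line t))
    ((hf'.clm_apply continuous_const).intervalIntegrable _ _)]
  simp

lemma hasFDerivAt_of_sub_eq_integral (hf' : Continuous f')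
    (hf : ∀ v, f (x + v) - f x = ∫ t in (0 : ℝ)..1, f' (x + t • v) v) :
    HasFDerivAt f (f' x) x := by
  refine ((HasFDerivAt.curveIntegral_segment_source hf').const_add (f x)).congr_of_eventuallyEq
    (Eventually.of_forall fun y ↦ ?_)
  simpa [curveIntegral_segment, AffineMap.lineMap_apply_module', add_comm, sub_eq_iff_eq_add] using
    hf (y - x)

end SegmentIntegral

section Weight

variable {E V : Type*} [NormedAddCommGroup E] [NormedAddCommGroup V] {γ δ : ℝ}

lemma one_add_norm_sub_rpow_neg_le (hγ : 0 ≤ γ) (x y : E) :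
    (1 + ‖x - y‖) ^ (-γ) ≤ (1 + ‖x‖) ^ γ * (1 + ‖y‖) ^ (-γ) := by
  have hy : 1 + ‖y‖ ≤ (1 + ‖x‖) * (1 + ‖x - y‖) := by
    nlinarith [norm_le_norm_add_norm_sub x y, mul_nonneg (norm_nonneg x) (norm_nonneg (x - y))]
  rw [Real.rpow_neg (by positivity), Real.rpow_neg (by positivity), ← div_eq_mul_inv,
    le_div_iff₀ (by positivity), inv_mul_le_iff₀ (by positivity), mul_comm,
    ← Real.mul_rpow (by positivity) (by positivity)]
  exact Real.rpow_le_rpow (by positivity) hy hγ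

lemma norm_rpow_neg_le_two_mul_one_add_norm (hγ : 0 ≤ γ) {z : E} (hz : 1 ≤ ‖z‖) :
    ‖z‖ ^ (-γ) ≤ 2 ^ γ * (1 + ‖z‖) ^ (-γ) := by
  have hz0 : 0 < ‖z‖ := by linarith
  rw [Real.rpow_neg hz0.le, Real.rpow_neg (by positivity), ← div_eq_mul_inv,
    le_div_iff₀ (by positivity), inv_mul_le_iff₀ (by positivity), mul_comm,
    ← Real.mul_rpow zero_le_two hz0.le]
  exact Real.rpow_le_rpow (by positivity) (by linarith) hγ

lemma memLp_top_of_norm_le_one_add_norm_rpow_neg [MeasurableSpace E] {μ : Measure E} {ρ : E → V}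
    {β M : ℝ} (hβ : 0 ≤ β) (hρ : AEStronglyMeasurable ρ μ)
    (hρβ : ∀ y, ‖ρ y‖ ≤ M * (1 + ‖y‖) ^ (-β)) : MemLp ρ ∞ μ := by
  have hM : 0 ≤ M := by simpa using (norm_nonneg _).trans (hρβ 0)
  refine memLp_top_of_bound hρ M (Eventually.of_forall fun y ↦ (hρβ y).trans ?_)
  exact mul_le_of_le_one_right hM
    (Real.rpow_le_one_of_one_le_of_nonpos (by linarith [norm_nonneg y]) (neg_nonpos.2 hβ))

lemma integrable_one_add_norm_rpow_neg_smul_mono [NormedSpace ℝ V] [MeasurableSpace E]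
    [OpensMeasurableSpace E] {μ : Measure E} {ρ : E → V} (hγδ : γ ≤ δ)
    (hρ : AEStronglyMeasurable ρ μ) (hργ : Integrable (fun y ↦ (1 + ‖y‖) ^ (-γ) • ρ y) μ) :
    Integrable (fun y ↦ (1 + ‖y‖) ^ (-δ) • ρ y) μ := by
  have h_meas : AEStronglyMeasurable (fun y : E ↦ (1 + ‖y‖) ^ (-δ)) μ :=
    Measurable.aestronglyMeasurable (by fun_prop)
  refine hργ.mono (h_meas.smul hρ) (Eventually.of_forall fun y ↦ ?_)
  rw [norm_smul, norm_smul]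
  gcongr
  rw [Real.norm_of_nonneg (by positivity), Real.norm_of_nonneg (by positivity)]
  exact Real.rpow_le_rpow_of_exponent_le (by linarith [norm_nonneg y]) (neg_le_neg hγδ)

lemma integrable_one_add_norm_rpow_neg_smul_of_norm_le [NormedSpace ℝ E] [FiniteDimensional ℝ E]
    [NormedSpace ℝ V] [MeasurableSpace E] [BorelSpace E] {μ : Measure E} [μ.IsAddHaarMeasure]
    {ρ : E → V} {β M : ℝ} (hβγ : finrank ℝ E < β + γ) (hρ : AEStronglyMeasurable ρ μ)
    (hρβ : ∀ y, ‖ρ y‖ ≤ M * (1 + ‖y‖) ^ (-β)) :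
    Integrable (fun y ↦ (1 + ‖y‖) ^ (-γ) • ρ y) μ := by
  have h_meas : AEStronglyMeasurable (fun y : E ↦ (1 + ‖y‖) ^ (-γ)) μ :=
    Measurable.aestronglyMeasurable (by fun_prop)
  refine ((integrable_one_add_norm hβγ).const_mul M).mono' (h_meas.smul hρ)
    (Eventually.of_forall fun y ↦ ?_)
  calc ‖(1 + ‖y‖) ^ (-γ) • ρ y‖ = (1 + ‖y‖) ^ (-γ) * ‖ρ y‖ := by
        rw [norm_smul, Real.norm_of_nonneg (by positivity)]
    _ ≤ (1 + ‖y‖) ^ (-γ) * (M * (1 + ‖y‖) ^ (-β)) := by gcongr; exact hρβ y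
    _ = M * (1 + ‖y‖) ^ (-(β + γ)) := by
      rw [neg_add, Real.rpow_add (by positivity)]
      ring

end Weight

lemma ae_forall_add_smul_ne {E : Type*} [NormedAddCommGroup E] [NormedSpace ℝ E]
    [FiniteDimensional ℝ E] [MeasurableSpace E] [BorelSpace E] (μ : Measure E)
    [μ.IsAddHaarMeasure] (hE : 1 < finrank ℝ E) (x v : E) :
    ∀ᵐ y ∂μ, ∀ t : ℝ, x + t • v ≠ y := by
  have h_line : AffineSubspace.mk' x (ℝ ∙ v) ≠ ⊤ := fun h ↦ by
    have h_dir : ℝ ∙ v = ⊤ := by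
      rw [← AffineSubspace.direction_mk' x (ℝ ∙ v), h, AffineSubspace.direction_top]
    have h_rank : finrank ℝ (ℝ ∙ v) ≤ 1 := by
      simpa using finrank_span_le_card (R := ℝ) ({v} : Set E)
    rw [h_dir, finrank_top] at h_rank
    exact hE.not_ge h_rank
  filter_upwards [measure_eq_zero_iff_ae_notMem.1 (Measure.addHaar_affineSubspace μ _ h_line)]
    with y hy t rfl
  exact hy (by simp [AffineSubspace.mem_mk', Submodule.smul_mem, Submodule.mem_span_singleton_self])

section ConvolutionIntegrand

variable {E V W F : Type*} [NormedAddCommGroup E] [NormedAddCommGroup V] [NormedSpace ℝ V]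
  [NormedAddCommGroup W] [NormedSpace ℝ W] [NormedAddCommGroup F] [NormedSpace ℝ F]
  {L : V →L[ℝ] W →L[ℝ] F} {ρ : E → V} {g : E → W} {γ C : ℝ}

lemma norm_convolution_integrand_le (hγ : 0 ≤ γ) (hg : ∀ z, ‖g z‖ ≤ C * (1 + ‖z‖) ^ (-γ))
    {x : E} {R : ℝ} (hx : ‖x‖ ≤ R) (y : E) :
    ‖L (ρ y) (g (x - y))‖ ≤ ‖L‖ * C * (1 + R) ^ γ * ‖(1 + ‖y‖) ^ (-γ) • ρ y‖ := by
  have hC : 0 ≤ C := by simpa using (norm_nonneg _).trans (hg 0)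
  have hg_le : ‖g (x - y)‖ ≤ C * ((1 + R) ^ γ * (1 + ‖y‖) ^ (-γ)) :=
    calc ‖g (x - y)‖ ≤ C * (1 + ‖x - y‖) ^ (-γ) := hg _
      _ ≤ C * ((1 + ‖x‖) ^ γ * (1 + ‖y‖) ^ (-γ)) := by
        gcongr
        exact one_add_norm_sub_rpow_neg_le hγ x y
      _ ≤ C * ((1 + R) ^ γ * (1 + ‖y‖) ^ (-γ)) := by gcongr
  calc ‖L (ρ y) (g (x - y))‖ ≤ ‖L‖ * ‖ρ y‖ * (C * ((1 + R) ^ γ * (1 + ‖y‖) ^ (-γ))) :=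
        L.le_of_opNorm₂_le_of_le le_rfl le_rfl hg_le
    _ = ‖L‖ * C * (1 + R) ^ γ * ‖(1 + ‖y‖) ^ (-γ) • ρ y‖ := by
      rw [norm_smul, Real.norm_of_nonneg (by positivity)]
      ring

lemma convolution_precompR_apply_of_convolutionExistsAt [NormedSpace ℝ E]
    [MeasurableSpace E] {μ : Measure E} {K' : E → E →L[ℝ] W} {x v : E}
    (h : ConvolutionExistsAt ρ K' x (L.precompR E) μ) :
    (ρ ⋆[L.precompR E, μ] K') x v = (ρ ⋆[L, μ] fun z ↦ K' z v) x := by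
  rw [convolution_def, convolution_def, ContinuousLinearMap.integral_apply h]
  rfl

end ConvolutionIntegrand

section Convolution

variable {E V W F : Type*} [NormedAddCommGroup E] [NormedSpace ℝ E] [FiniteDimensional ℝ E]
  [MeasurableSpace E] [BorelSpace E] {μ : Measure E} [μ.IsAddHaarMeasure]
  [NormedAddCommGroup V] [NormedSpace ℝ V] [NormedAddCommGroup W] [NormedSpace ℝ W]
  [NormedAddCommGroup F] [NormedSpace ℝ F] {L : V →L[ℝ] W →L[ℝ] F} {ρ : E → V} {g : E → W}

lemma convolutionExists_of_memLp_top (hρ : MemLp ρ ∞ μ) (hg : Integrable g μ) :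
    ConvolutionExists ρ g L μ := fun x ↦
  ConvolutionExistsAt.of_norm L ((hg.comp_sub_left x).norm.essSup_smul hρ.1.norm
    (by simpa only [enorm_norm, eLpNorm_exponent_top] using! hρ.eLpNorm_ne_top)) hρ.1 hg.1

lemma norm_convolution_le_lpNorm_top_mul (hρ : MemLp ρ ∞ μ) (hg : Integrable g μ) (x : E) :
    ‖(ρ ⋆[L, μ] g) x‖ ≤ ‖L‖ * lpNorm ρ ∞ μ * ∫ z, ‖g z‖ ∂μ := by
  rw [← integral_sub_left_eq_self (fun z ↦ ‖g z‖) μ x, ← integral_const_mul]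
  refine norm_integral_le_of_norm_le ((hg.comp_sub_left x).norm.const_mul _) ?_
  filter_upwards [ae_le_lpNorm_exponent_top hρ] with y hy
  exact L.le_of_opNorm₂_le_of_le le_rfl hy le_rfl

lemma continuous_convolution_of_memLp_top (hρ : MemLp ρ ∞ μ) (hg : Integrable g μ) :
    Continuous (ρ ⋆[L, μ] g) := by
  refine continuous_of_uniform_approx_of_continuous fun u hu ↦ ?_
  obtain ⟨ε, hε, hεu⟩ := Metric.mem_uniformity_dist.1 hu
  set A := ‖L‖ * lpNorm ρ ∞ μ
  have hA : 0 ≤ A := mul_nonneg (norm_nonneg L) lpNorm_nonneg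
  obtain ⟨k, hk_supp, hgk, hk_cont, hk⟩ :=
    hg.exists_hasCompactSupport_integral_sub_le (ε := ε / (A + 1)) (by positivity)
  refine ⟨ρ ⋆[L, μ] k, hk_supp.continuous_convolution_right L (hρ.locallyIntegrable le_top) hk_cont,
    fun x ↦ hεu ?_⟩
  have h_split : ρ ⋆[L, μ] g = ρ ⋆[L, μ] k + ρ ⋆[L, μ] (g - k) := by
    rw [← (convolutionExists_of_memLp_top hρ hk).distrib_add
      (convolutionExists_of_memLp_top hρ (hg.sub hk)), add_sub_cancel]
  calc dist ((ρ ⋆[L, μ] g) x) ((ρ ⋆[L, μ] k) x) = ‖(ρ ⋆[L, μ] (g - k)) x‖ := by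
        rw [h_split, dist_eq_norm, Pi.add_apply, add_sub_cancel_left]
    _ ≤ A * ∫ z, ‖(g - k) z‖ ∂μ := norm_convolution_le_lpNorm_top_mul hρ (hg.sub hk) x
    _ ≤ A * (ε / (A + 1)) := by gcongr; exact hgk
    _ < ε := by
      rw [mul_div_assoc', div_lt_iff₀ (by positivity)]
      linarith

variable {γ C : ℝ}

lemma convolutionExists_of_norm_le_one_add_norm_rpow_neg (hγ : 0 ≤ γ)
    (hρ : AEStronglyMeasurable ρ μ) (hργ : Integrable (fun y ↦ (1 + ‖y‖) ^ (-γ) • ρ y) μ)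
    (hg_meas : AEStronglyMeasurable g μ) (hg : ∀ z, ‖g z‖ ≤ C * (1 + ‖z‖) ^ (-γ)) :
    ConvolutionExists ρ g L μ := fun x ↦
  (hργ.norm.const_mul _).mono' (hρ.convolution_integrand_snd L hg_meas x)
    (Eventually.of_forall (norm_convolution_integrand_le hγ hg le_rfl))

lemma continuous_convolution_of_norm_le_one_add_norm_rpow_neg (hγ : 0 ≤ γ)
    (hρ : AEStronglyMeasurable ρ μ) (hργ : Integrable (fun y ↦ (1 + ‖y‖) ^ (-γ) • ρ y) μ)
    (hg_meas : AEStronglyMeasurable g μ) (hg : ∀ z, ‖g z‖ ≤ C * (1 + ‖z‖) ^ (-γ))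
    (hg_cont : ∀ᵐ z ∂μ, ContinuousAt g z) : Continuous (ρ ⋆[L, μ] g) := by
  refine continuous_iff_continuousAt.2 fun x₀ ↦ continuousAt_of_dominated
    (Eventually.of_forall fun x ↦ hρ.convolution_integrand_snd L hg_meas x) ?_
    (hργ.norm.const_mul (‖L‖ * C * (1 + (‖x₀‖ + 1)) ^ γ)) ?_
  · filter_upwards [ball_mem_nhds x₀ one_pos] with x hx
    exact Eventually.of_forall
      (norm_convolution_integrand_le hγ hg (norm_lt_of_mem_ball hx).le)
  · filter_upwards [(Measure.measurePreserving_sub_left μ x₀).quasiMeasurePreserving.ae hg_cont]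
      with y hy
    exact (L (ρ y)).continuous.continuousAt.comp
      (hy.comp (f := fun x ↦ x - y) (by fun_prop))

end Convolution

/-- A singular kernel of order `γ`: it is continuous away from the origin and bounded there by a
multiple of `‖z‖ ^ (-γ)`, both at the singularity and at infinity. Its value at the origin is
unconstrained. -/
structure IsSingularKernel {E W : Type*} [NormedAddCommGroup E] [NormedAddCommGroup W] (γ : ℝ)
    (K : E → W) : Prop where
  continuousOn : ContinuousOn K {0}ᶜ
  isBigO : K =O[𝓟 {0}ᶜ] fun z ↦ ‖z‖ ^ (-γ)

namespace IsSingularKernel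

section Kernel

variable {E W : Type*} [NormedAddCommGroup E] [NormedAddCommGroup W] {K : E → W} {γ : ℝ}

lemma norm (hK : IsSingularKernel γ K) : IsSingularKernel γ fun z ↦ ‖K z‖ :=
  ⟨hK.continuousOn.norm, hK.isBigO.norm_left⟩

lemma exists_norm_le (hK : IsSingularKernel γ K) :
    ∃ C, 0 ≤ C ∧ ∀ z ≠ 0, ‖K z‖ ≤ C * ‖z‖ ^ (-γ) := by
  obtain ⟨C, hC, hKC⟩ := hK.isBigO.exists_nonneg
  refine ⟨C, hC, fun z hz ↦ ?_⟩
  simpa [Real.abs_rpow_of_nonneg] using isBigOWith_principal.1 hKC z hz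

lemma exists_norm_indicator_compl_ball_le (hK : IsSingularKernel γ K) (hγ : 0 ≤ γ) :
    ∃ C, ∀ z, ‖(ball 0 1)ᶜ.indicator K z‖ ≤ C * (1 + ‖z‖) ^ (-γ) := by
  obtain ⟨C, hC, hKC⟩ := hK.exists_norm_le
  refine ⟨C * 2 ^ γ, fun z ↦ ?_⟩
  by_cases hz : z ∈ ball 0 1
  · rw [indicator_of_notMem (notMem_compl_iff.2 hz), norm_zero]
    positivity
  · have hz1 : 1 ≤ ‖z‖ := by simpa using hz
    rw [indicator_of_mem hz, mul_assoc]
    calc ‖K z‖ ≤ C * ‖z‖ ^ (-γ) := hKC z (norm_pos_iff.1 (by linarith))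
      _ ≤ C * (2 ^ γ * (1 + ‖z‖) ^ (-γ)) := by
        gcongr
        exact norm_rpow_neg_le_two_mul_one_add_norm hγ hz1

lemma stronglyMeasurable [MeasurableSpace E] [BorelSpace E] [SecondCountableTopology E]
    (hK : IsSingularKernel γ K) : StronglyMeasurable K :=
  hK.continuousOn.stronglyMeasurable_of_countable_compl (by simp)

lemma clm_apply [NormedSpace ℝ E] [NormedSpace ℝ W] {K' : E → E →L[ℝ] W}
    (hK' : IsSingularKernel γ K') (v : E) : IsSingularKernel γ fun z ↦ K' z v :=
  ⟨hK'.continuousOn.clm_apply continuousOn_const,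
    ((apply ℝ W v).isBigO_comp K' _).trans hK'.isBigO⟩

variable [NormedSpace ℝ E] [FiniteDimensional ℝ E] [MeasurableSpace E] [BorelSpace E]
  {μ : Measure E} [μ.IsAddHaarMeasure]

lemma integrable_indicator_ball (hK : IsSingularKernel γ K) (hγ : 0 ≤ γ)
    (hγE : γ < finrank ℝ E) : Integrable ((ball 0 1).indicator K) μ := by
  have hE : 0 < finrank ℝ E := by exact_mod_cast hγ.trans_lt hγE
  have : Nontrivial E := nontrivial_of_finrank_pos hE
  obtain ⟨C, -, hKC⟩ := hK.exists_norm_le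
  have hKC_ae : ∀ᵐ z ∂μ, ‖K z‖ ≤ C * ‖z‖ ^ (-γ) := by
    filter_upwards [Measure.ae_ne μ 0] with z hz using hKC z hz
  rw [integrable_indicator_iff measurableSet_ball]
  exact integrableOn_ball_of_norm_le_rpow hE hγE (ae_restrict_of_ae hKC_ae)
    hK.stronglyMeasurable.aestronglyMeasurable

lemma ae_continuousAt_indicator_compl_ball (hK : IsSingularKernel γ K) :
    ∀ᵐ z ∂μ, ContinuousAt ((ball 0 1)ᶜ.indicator K) z := by
  have h_sphere : ∀ᵐ z ∂μ, z ∉ sphere (0 : E) 1 :=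
    measure_eq_zero_iff_ae_notMem.1 (Measure.addHaar_sphere_of_ne_zero μ 0 one_ne_zero)
  filter_upwards [h_sphere] with z hz
  refine ContinuousOn.continuousAt_indicator (hK.continuousOn.mono fun w hw ↦ ?_) ?_
  · rintro rfl
    simpa using interior_subset hw
  · rwa [frontier_compl, frontier_ball _ one_ne_zero]

end Kernel

section Convolution

variable {E V W F : Type*} [NormedAddCommGroup E] [NormedSpace ℝ E] [FiniteDimensional ℝ E]
  [MeasurableSpace E] [BorelSpace E] {μ : Measure E} [μ.IsAddHaarMeasure]
  [NormedAddCommGroup V] [NormedSpace ℝ V] [NormedAddCommGroup W] [NormedSpace ℝ W]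
  [NormedAddCommGroup F] [NormedSpace ℝ F] {L : V →L[ℝ] W →L[ℝ] F}
  {ρ : E → V} {K : E → W} {γ : ℝ}

lemma convolutionExists (hK : IsSingularKernel γ K) (hγ : 0 ≤ γ) (hγE : γ < finrank ℝ E)
    (hρ : MemLp ρ ∞ μ) (hργ : Integrable (fun y ↦ (1 + ‖y‖) ^ (-γ) • ρ y) μ) :
    ConvolutionExists ρ K L μ := fun x ↦ by
  obtain ⟨C, hC⟩ := hK.exists_norm_indicator_compl_ball_le hγ
  have h_near := convolutionExists_of_memLp_top (L := L) hρ (hK.integrable_indicator_ball hγ hγE)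
  have h_far := convolutionExists_of_norm_le_one_add_norm_rpow_neg (L := L) hγ hρ.1 hργ
    (hK.stronglyMeasurable.indicator measurableSet_ball.compl).aestronglyMeasurable hC
  refine ((h_near x).add (h_far x)).congr (Eventually.of_forall fun y ↦ ?_)
  simp only [Pi.add_apply, ← map_add, indicator_self_add_compl_apply]

lemma continuous_convolution (hK : IsSingularKernel γ K) (hγ : 0 ≤ γ) (hγE : γ < finrank ℝ E)
    (hρ : MemLp ρ ∞ μ) (hργ : Integrable (fun y ↦ (1 + ‖y‖) ^ (-γ) • ρ y) μ) :
    Continuous (ρ ⋆[L, μ] K) := by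
  obtain ⟨C, hC⟩ := hK.exists_norm_indicator_compl_ball_le hγ
  have h_near := hK.integrable_indicator_ball (μ := μ) hγ hγE
  have h_far : AEStronglyMeasurable ((ball 0 1)ᶜ.indicator K) μ :=
    (hK.stronglyMeasurable.indicator measurableSet_ball.compl).aestronglyMeasurable
  rw [← indicator_self_add_compl (ball 0 1) K,
    (convolutionExists_of_memLp_top hρ h_near).distrib_add
      (convolutionExists_of_norm_le_one_add_norm_rpow_neg hγ hρ.1 hργ h_far hC)]
  exact (continuous_convolution_of_memLp_top hρ h_near).add
    (continuous_convolution_of_norm_le_one_add_norm_rpow_neg hγ hρ.1 hργ h_far hC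
      hK.ae_continuousAt_indicator_compl_ball)

lemma integrable_uncurry_convolution_integrand_segment (hK : IsSingularKernel γ K) (hγ : 0 ≤ γ)
    (hγE : γ < finrank ℝ E) (hρ : MemLp ρ ∞ μ)
    (hργ : Integrable (fun y ↦ (1 + ‖y‖) ^ (-γ) • ρ y) μ) (x v : E) :
    Integrable (Function.uncurry fun (t : ℝ) y ↦ L (ρ y) (K (x + t • v - y)))
      ((volume.restrict (Ioc 0 1)).prod μ) := by
  have hργ_norm : Integrable (fun y ↦ (1 + ‖y‖) ^ (-γ) • ‖ρ y‖) μ :=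
    hργ.norm.congr (Eventually.of_forall fun y ↦ by
      simp only [norm_smul, smul_eq_mul]
      rw [Real.norm_of_nonneg (by positivity)])
  have hρ_meas : AEStronglyMeasurable (fun p : ℝ × E ↦ ρ p.2)
      ((volume.restrict (Ioc 0 1)).prod μ) := hρ.1.comp_snd
  have hK_meas : AEStronglyMeasurable (fun p : ℝ × E ↦ K (x + p.1 • v - p.2))
      ((volume.restrict (Ioc 0 1)).prod μ) :=
    (hK.stronglyMeasurable.comp_measurable
      (by fun_prop : Continuous fun p : ℝ × E ↦ x + p.1 • v - p.2).measurable).aestronglyMeasurable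
  have h_norms : Integrable (fun p : ℝ × E ↦ ‖ρ p.2‖ * ‖K (x + p.1 • v - p.2)‖)
      ((volume.restrict (Ioc 0 1)).prod μ) := by
    refine (integrable_prod_iff (hρ_meas.norm.mul hK_meas.norm)).2
      ⟨Eventually.of_forall fun t ↦ ?_, ?_⟩
    · exact hK.norm.convolutionExists (L := mul ℝ ℝ) hγ hγE hρ.norm hργ_norm (x + t • v)
    · have h_cont := (hK.norm.continuous_convolution (L := mul ℝ ℝ) hγ hγE hρ.norm hργ_norm).comp
        (by fun_prop : Continuous fun t : ℝ ↦ x + t • v)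
      refine (h_cont.integrableOn_Icc.mono_set Ioc_subset_Icc_self).congr
        (Eventually.of_forall fun t ↦ integral_congr_ae (Eventually.of_forall fun y ↦ ?_))
      simp
  refine (h_norms.const_mul ‖L‖).mono' (L.aestronglyMeasurable_comp₂ hρ_meas hK_meas)
    (Eventually.of_forall fun p ↦ ?_)
  rw [← mul_assoc]
  exact L.le_opNorm₂ _ _

end Convolution

section Derivative

variable {E V W F : Type*} [NormedAddCommGroup E] [NormedSpace ℝ E] [FiniteDimensional ℝ E]
  [MeasurableSpace E] [BorelSpace E] {μ : Measure E} [μ.IsAddHaarMeasure]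
  [NormedAddCommGroup V] [NormedSpace ℝ V] [NormedAddCommGroup W] [NormedSpace ℝ W]
  [NormedAddCommGroup F] [NormedSpace ℝ F] [CompleteSpace F] {L : V →L[ℝ] W →L[ℝ] F}
  {ρ : E → V} {K : E → W} {K' : E → E →L[ℝ] W} {γ : ℝ}

lemma convolution_sub_eq_integral (hE : 1 < finrank ℝ E) (hK' : IsSingularKernel γ K')
    (hder : ∀ z ≠ 0, HasFDerivAt K (K' z) z) (hK : ConvolutionExists ρ K L μ) (hγ : 0 ≤ γ)
    (hγE : γ < finrank ℝ E) (hρ : MemLp ρ ∞ μ)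
    (hργ : Integrable (fun y ↦ (1 + ‖y‖) ^ (-γ) • ρ y) μ) (x v : E) :
    (ρ ⋆[L, μ] K) (x + v) - (ρ ⋆[L, μ] K) x =
      ∫ t in (0 : ℝ)..1, (ρ ⋆[L, μ] fun z ↦ K' z v) (x + t • v) := by
  simp_rw [convolution_def]
  rw [← integral_sub (hK _) (hK _), intervalIntegral.integral_of_le zero_le_one,
    integral_integral_swap
      ((hK'.clm_apply v).integrable_uncurry_convolution_integrand_segment hγ hγE hρ hργ x v)]
  refine integral_congr_ae ?_
  filter_upwards [ae_forall_add_smul_ne μ hE x v] with y hy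
  have h_line (t : ℝ) : x - y + t • v ≠ 0 := by
    rw [sub_add_eq_add_sub, sub_ne_zero]
    exact hy t
  simp_rw [← sub_add_eq_add_sub]
  rw [← intervalIntegral.integral_of_le zero_le_one]
  exact sub_eq_integral_of_hasFDerivAt_line (f' := fun z ↦ (L (ρ y)).comp (K' z))
    (fun t ↦ (L (ρ y)).hasFDerivAt.comp _ (hder _ (h_line t)))
    (continuous_const.clm_comp (hK'.continuousOn.comp_continuous (by fun_prop) h_line))

lemma hasFDerivAt_convolution (hE : 1 < finrank ℝ E) (hK' : IsSingularKernel γ K')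
    (hder : ∀ z ≠ 0, HasFDerivAt K (K' z) z) (hK : ConvolutionExists ρ K L μ) (hγ : 0 ≤ γ)
    (hγE : γ < finrank ℝ E) (hρ : MemLp ρ ∞ μ)
    (hργ : Integrable (fun y ↦ (1 + ‖y‖) ^ (-γ) • ρ y) μ) (x : E) :
    HasFDerivAt (ρ ⋆[L, μ] K) ((ρ ⋆[L.precompR E, μ] K') x) x := by
  refine hasFDerivAt_of_sub_eq_integral (hK'.continuous_convolution hγ hγE hρ hργ) fun v ↦ ?_
  have hK'_exists := hK'.convolutionExists (L := L.precompR E) hγ hγE hρ hργ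
  simp_rw [convolution_precompR_apply_of_convolutionExistsAt (hK'_exists _)]
  exact convolution_sub_eq_integral hE hK' hder hK hγ hγE hρ hργ x v

end Derivative

end IsSingularKernel

/-- Positive homogeneity of degree `a`: the property of the kernel that survives differentiation,
with `a` lowered by one. It is required at the origin too, so that `K 0 = 0` unless `a = 0`. -/
def IsPosHomogeneous {E W : Type*} [AddCommGroup E] [Module ℝ E] [AddCommGroup W] [Module ℝ W]
    (a : ℝ) (K : E → W) : Prop :=
  ∀ c : ℝ, 0 < c → ∀ z, K (c • z) = c ^ a • K z

namespace IsPosHomogeneous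

section Basic

variable {E W : Type*} [NormedAddCommGroup E] [NormedSpace ℝ E] [NormedAddCommGroup W]
  [NormedSpace ℝ W] {a γ : ℝ} {K : E → W}

lemma norm_rpow (a : ℝ) : IsPosHomogeneous a fun z : E ↦ ‖z‖ ^ a := fun c hc z ↦ by
  simp only [norm_smul, Real.norm_of_nonneg hc.le, Real.mul_rpow hc.le (norm_nonneg z),
    smul_eq_mul]

protected lemma fderiv (hK : IsPosHomogeneous a K) : IsPosHomogeneous (a - 1) (fderiv ℝ K) := by
  intro c hc z
  have h_chain : c • fderiv ℝ K (c • z) = c ^ a • fderiv ℝ K z :=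
    calc c • fderiv ℝ K (c • z) = fderiv ℝ (fun w ↦ K (c • w)) z :=
          (fderiv_comp_smul c).symm
      _ = fderiv ℝ (fun w ↦ c ^ a • K w) z := by rw [funext (hK c hc)]
      _ = c ^ a • fderiv ℝ K z := congrFun (fderiv_const_smul_field (f := K) (c ^ a)) z
  rw [← inv_smul_smul₀ hc.ne' (fderiv ℝ K (c • z)), h_chain, smul_smul,
    Real.rpow_sub_one hc.ne', inv_mul_eq_div]

lemma clm_apply {K' : E → E →L[ℝ] W} (hK' : IsPosHomogeneous a K') (v : E) :
    IsPosHomogeneous a fun z ↦ K' z v := fun c hc z ↦ by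
  simp only [hK' c hc z, FunLike.coe_smul, Pi.smul_apply]

lemma isSingularKernel [FiniteDimensional ℝ E] (hK : IsPosHomogeneous (-γ) K)
    (hK_cont : ContinuousOn K {0}ᶜ) : IsSingularKernel γ K := by
  have : ProperSpace E := FiniteDimensional.proper ℝ E
  obtain ⟨C, hC⟩ := (isCompact_sphere (0 : E) 1).exists_bound_of_continuousOn
    (hK_cont.mono fun z hz ↦ ne_of_mem_sphere hz one_ne_zero)
  refine ⟨hK_cont, .of_bound C (eventually_principal.2 fun z hz ↦ ?_)⟩
  have hz0 : 0 < ‖z‖ := norm_pos_iff.2 hz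
  have h_unit : ‖z‖⁻¹ • z ∈ sphere (0 : E) 1 := by simp [norm_smul, hz0.ne']
  calc ‖K z‖ = ‖K (‖z‖ • ‖z‖⁻¹ • z)‖ := by rw [smul_inv_smul₀ hz0.ne']
    _ = ‖‖z‖ ^ (-γ)‖ * ‖K (‖z‖⁻¹ • z)‖ := by rw [hK _ hz0, norm_smul]
    _ ≤ C * ‖‖z‖ ^ (-γ)‖ := by
      rw [mul_comm]
      gcongr
      exact hC _ h_unit

end Basic

section Convolution

variable {E V W F : Type*} [NormedAddCommGroup E] [NormedSpace ℝ E] [FiniteDimensional ℝ E]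
  [MeasurableSpace E] [BorelSpace E] {μ : Measure E} [μ.IsAddHaarMeasure]
  [NormedAddCommGroup V] [NormedSpace ℝ V] [NormedAddCommGroup W] [NormedSpace ℝ W]
  [NormedAddCommGroup F] [NormedSpace ℝ F] [CompleteSpace F] {L : V →L[ℝ] W →L[ℝ] F} {ρ : E → V}

lemma contDiff_convolution (n : ℕ) {K : E → W} {γ : ℝ} (hK : IsPosHomogeneous (-γ) K)
    (hK_diff : ContDiffOn ℝ n K {0}ᶜ) (hγ : 0 ≤ γ) (hγE : γ + n < finrank ℝ E)
    (hρ : MemLp ρ ∞ μ) (hργ : Integrable (fun y ↦ (1 + ‖y‖) ^ (-γ) • ρ y) μ) :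
    ContDiff ℝ n (ρ ⋆[L, μ] K) := by
  induction n generalizing K γ with
  | zero =>
    exact contDiff_zero.2 <| (hK.isSingularKernel hK_diff.continuousOn).continuous_convolution hγ
      (by simpa using hγE) hρ hργ
  | succ n ih =>
    push_cast at hγE hK_diff ⊢
    have hγE' : γ + 1 < finrank ℝ E := by linarith [n.cast_nonneg (α := ℝ)]
    have hE : 1 < finrank ℝ E := by exact_mod_cast (show (1 : ℝ) < finrank ℝ E by linarith)
    have hργ' := integrable_one_add_norm_rpow_neg_smul_mono (by linarith : γ ≤ γ + 1) hρ.1 hργ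
    have hK' : IsPosHomogeneous (-(γ + 1)) (fderiv ℝ K) := neg_add' γ 1 ▸ hK.fderiv
    have hK'_diff : ContDiffOn ℝ n (fderiv ℝ K) {0}ᶜ :=
      hK_diff.fderiv_of_isOpen isOpen_compl_singleton le_rfl
    have hK'_sing := hK'.isSingularKernel hK'_diff.continuousOn
    have hder (z : E) (hz : z ≠ 0) : HasFDerivAt K (fderiv ℝ K z) z :=
      ((hK_diff.differentiableOn (by simp)).differentiableAt
        (isOpen_compl_singleton.mem_nhds hz)).hasFDerivAt
    have h_exists : ConvolutionExists ρ K L μ :=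
      (hK.isSingularKernel hK_diff.continuousOn).convolutionExists hγ (by linarith) hρ hργ
    have h_fderiv :=
      hK'_sing.hasFDerivAt_convolution hE hder h_exists (by linarith) hγE' hρ hργ'
    refine contDiff_succ_iff_fderiv_apply.2
      ⟨fun x ↦ (h_fderiv x).differentiableAt, by simp, fun v ↦ ?_⟩
    have h_apply : (fun x ↦ fderiv ℝ (ρ ⋆[L, μ] K) x v) =
        ρ ⋆[L, μ] fun z ↦ fderiv ℝ K z v := funext fun x ↦ by
      rw [(h_fderiv x).fderiv, convolution_precompR_apply_of_convolutionExistsAt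
        (hK'_sing.convolutionExists (by linarith) hγE' hρ hργ' x)]
    rw [h_apply]
    exact ih (hK'.clm_apply v) (hK'_diff.clm_apply contDiffOn_const) (by linarith)
      (by linarith) hργ'

end Convolution

end IsPosHomogeneous

theorem potential_regularity_general {E F : Type*} [NormedAddCommGroup E] [InnerProductSpace ℝ E]
    [FiniteDimensional ℝ E] [MeasurableSpace E] [BorelSpace E] {μ : Measure E}
    [μ.IsAddHaarMeasure] [NormedAddCommGroup F] [NormedSpace ℝ F] [CompleteSpace F] {ρ : E → F}
    {γ : ℝ} (hγ : 0 ≤ γ) (hγE : γ < finrank ℝ E) (hρ : MemLp ρ ∞ μ)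
    (hργ : Integrable (fun y ↦ (1 + ‖y‖) ^ (-γ) • ρ y) μ) :
    (∀ x, Integrable (fun y ↦ (‖x - y‖ ^ γ)⁻¹ • ρ y) μ) ∧
      ∀ n : ℕ, n < finrank ℝ E - γ → ContDiff ℝ n fun x ↦ ∫ y, (‖x - y‖ ^ γ)⁻¹ • ρ y ∂μ := by
  have h_homog : IsPosHomogeneous (-γ) fun z : E ↦ ‖z‖ ^ (-γ) := .norm_rpow _
  have h_diff (n : ℕ) : ContDiffOn ℝ n (fun z : E ↦ ‖z‖ ^ (-γ)) {0}ᶜ := fun z hz ↦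
    ((contDiffAt_norm ℝ hz).rpow_const_of_ne (norm_ne_zero_iff.2 hz)).contDiffWithinAt
  simp_rw [← Real.rpow_neg (norm_nonneg _)]
  exact ⟨(h_homog.isSingularKernel (h_diff 0).continuousOn).convolutionExists
      (L := (lsmul ℝ ℝ).flip) hγ hγE hρ hργ, fun n hn ↦
    h_homog.contDiff_convolution n (L := (lsmul ℝ ℝ).flip) (h_diff n) hγ (by linarith) hρ hργ⟩

/-- Regularity of Riesz/Coulomb potentials: let `0 < γ < d`, `β + γ > d`, `M > 0`, and let
`ρ : ℝ^d → ℝ` be measurable with `|ρ y| ≤ M (1 + |y|)^{−β}`.  Then for every `x` the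
function `y ↦ ρ y / |x − y|^γ` is Lebesgue integrable, and the potential
`φ_γ x = ∫ ρ y / |x − y|^γ dy` is of class `C^n` for every integer `n < d − γ`
(equivalently, of class `C^n` for the largest such `n`). -/
theorem potential_regularity (d : ℕ) (hd : 1 ≤ d) (γ β M : ℝ)
    (hγ0 : 0 < γ) (hγd : γ < d) (hβγ : (d : ℝ) < β + γ) (hM : 0 < M)
    (ρ : EuclideanSpace ℝ (Fin d) → ℝ) (hmeas : Measurable ρ)
    (hbound : ∀ y, |ρ y| ≤ M * (1 + ‖y‖) ^ (-β)) :
    (∀ x, Integrable (fun y => ρ y / ‖x - y‖ ^ γ)) ∧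
    (∀ n : ℕ, (n : ℝ) < (d : ℝ) - γ →
      ContDiff ℝ n (fun x => ∫ y, ρ y / ‖x - y‖ ^ γ)) := by
  have hρ : AEStronglyMeasurable ρ := hmeas.aestronglyMeasurable
  simpa only [div_eq_inv_mul, smul_eq_mul, finrank_euclideanSpace_fin] using
    potential_regularity_general hγ0.le (by simpa using hγd)
      (memLp_top_of_norm_le_one_add_norm_rpow_neg (by linarith) hρ hbound)
      (integrable_one_add_norm_rpow_neg_smul_of_norm_le (by simpa using hβγ) hρ hbound)
end
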